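/- arXiv:1806.03625 — 3 statements merged into one kernel-verified Lean document; each statement's English description precedes it below -/
import Mathlib

section
/- Let t ≥ 1 be an integer and let M be a t-cyclic matroid. Then r(M) = r*(M) = |E(M)|/2, where r and r* denote the rank of M and of its dual M*, respectively. -/
open Set

namespace CyclicArr

variable {α : Type*}

/-- `C` is a circuit of the matroid `M`: a minimal dependent set. -/
def Cct (M : Matroid α) (C : Set α) : Prop := Minimal M.Dep C

/-- The set of `len` consecutive elements `{e_i, e_{i+1}, …, e_{i+len-1}}`
in a cyclic ordering `e`, subscripts mod `n`. -/
def seg {n : ℕ} (e : ZMod n → α) (i : ℤ) (len : ℕ) : Set α :=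
  (fun k : ℕ => e ((i + k : ℤ) : ZMod n)) '' Set.Iio len

/-- `e` is a cyclic ordering of (the ground set of) `M`. -/
def CyclicOrd {n : ℕ} (M : Matroid α) (e : ZMod n → α) : Prop :=
  Function.Injective e ∧ Set.range e = M.E

/-- `e` is a cyclic `(t-1, t)`-ordering of `M`: every `t-1` consecutive elements
are contained in a `t`-element circuit and a `t`-element cocircuit. -/
def CyclicPropOrd {n : ℕ} (M : Matroid α) (t : ℕ) (e : ZMod n → α) : Prop :=
  CyclicOrd M e ∧
  ∀ i : ℤ, (∃ C, Cct M C ∧ C.ncard = t ∧ seg e i (t-1) ⊆ C) ∧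
           (∃ C, Cct M✶ C ∧ C.ncard = t ∧ seg e i (t-1) ⊆ C)

/-- `M` has the cyclic `(t-1, t)`-property: it admits a cyclic `(t-1, t)`-ordering. -/
def HasCycProp (M : Matroid α) (t : ℕ) : Prop :=
  ∃ (n : ℕ) (e : ZMod n → α), CyclicPropOrd M t e

/-- `e` is an odd `t`-cyclic ordering of `M` (with `n ≥ t+1`): for all odd `i ∈ {1,…,n}`,
`{e_i, …, e_{i+t-1}}` is a `t`-element circuit and `{e_{i+1}, …, e_{i+t}}` is a
`t`-element cocircuit. -/
def OddTCycOrd {n : ℕ} (M : Matroid α) (t : ℕ) (e : ZMod n → α) : Prop :=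
  CyclicOrd M e ∧ t + 1 ≤ n ∧
  ∀ i : ℕ, Odd i → 1 ≤ i → i ≤ n →
    (Cct M (seg e (i : ℤ) t) ∧ (seg e (i : ℤ) t).ncard = t) ∧
    (Cct M✶ (seg e ((i : ℤ) + 1) t) ∧ (seg e ((i : ℤ) + 1) t).ncard = t)

/-- `e` is an even `t`-cyclic ordering of `M` (with `n ≥ t+1`): for all odd `i ∈ {1,…,n}`,
`{e_i, …, e_{i+t-1}}` is both a `t`-element circuit and a `t`-element cocircuit. -/
def EvenTCycOrd {n : ℕ} (M : Matroid α) (t : ℕ) (e : ZMod n → α) : Prop :=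
  CyclicOrd M e ∧ t + 1 ≤ n ∧
  ∀ i : ℕ, Odd i → 1 ≤ i → i ≤ n →
    Cct M (seg e (i : ℤ) t) ∧ Cct M✶ (seg e (i : ℤ) t) ∧ (seg e (i : ℤ) t).ncard = t

/-- `M` is `t`-cyclic: it admits an odd or even `t`-cyclic ordering. -/
def TCyclic (M : Matroid α) (t : ℕ) : Prop :=
  ∃ (n : ℕ) (e : ZMod n → α), OddTCycOrd M t e ∨ EvenTCycOrd M t e

/-- The rank of a set `X` in a matroid `M`: the maximum cardinality of an
independent subset of `X` (for a finite matroid). -/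
noncomputable def rkf (M : Matroid α) (X : Set α) : ℕ :=
  sSup {k | ∃ I, M.Indep I ∧ I ⊆ X ∧ I.ncard = k}

/-- The connectivity function `λ(X) = r(X) + r*(X) - |X|`, valued in `ℤ`. -/
noncomputable def lam (M : Matroid α) (X : Set α) : ℤ :=
  (rkf M X : ℤ) + (rkf M✶ X : ℤ) - (X.ncard : ℤ)

/-- The local connectivity `⊓(X, Y) = r(X) + r(Y) - r(X ∪ Y)`, valued in `ℤ`. -/
noncomputable def pic (M : Matroid α) (X Y : Set α) : ℤ :=
  (rkf M X : ℤ) + (rkf M Y : ℤ) - (rkf M (X ∪ Y) : ℤ)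

/-- `X` is exactly `k`-separating: `λ(X) = k - 1`. -/
noncomputable def ExactSep (M : Matroid α) (k : ℕ) (X : Set α) : Prop :=
  lam M X = (k : ℤ) - 1

/-- `(P_1, …, P_m)` is a concatenation of the cyclic ordering `e`, where `P i` is the
block of `l i` consecutive elements starting at position `a i`, and the blocks occur in
cyclic order and partition the ground set. -/
def IsConcat {n m : ℕ} (e : ZMod n → α) (P : ZMod m → Set α) (a l : ZMod m → ℕ) : Prop :=
  (∀ i, 1 ≤ l i) ∧
  (∀ i, ((a (i + 1) : ZMod n)) = ((a i + l i : ℕ) : ZMod n)) ∧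
  (∀ i, P i = seg e (a i : ℤ) (l i)) ∧
  Set.univ.PairwiseDisjoint P ∧
  (⋃ i, P i) = Set.range e

/-- `(P_1, …, P_m)` is a `k`-flower of `M`: a partition of the ground set into nonempty
sets, each exactly `k`-separating, with consecutive unions exactly `k`-separating. -/
noncomputable def IsFlower (M : Matroid α) (k : ℕ) {m : ℕ} (P : ZMod m → Set α) : Prop :=
  2 ≤ m ∧
  Set.univ.PairwiseDisjoint P ∧ (⋃ i, P i) = M.E ∧
  (∀ i, (P i).Nonempty) ∧
  (∀ i, ExactSep M k (P i)) ∧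
  (3 ≤ m → ∀ i, ExactSep M k (P i ∪ P (i + 1)))

/-- `I ⊆ ZMod m` is a set of consecutive members in the cyclic order. -/
def CycInterval {m : ℕ} (I : Set (ZMod m)) : Prop :=
  ∃ (a : ZMod m) (len : ℕ), 0 < len ∧ I = (fun k : ℕ => a + (k : ZMod m)) '' Set.Iio len

/-- A `k`-daisy: a `k`-flower in which the union of a proper nonempty collection of
petals is exactly `k`-separating precisely when the petals are consecutive. -/
noncomputable def IsDaisy (M : Matroid α) (k : ℕ) {m : ℕ} (P : ZMod m → Set α) : Prop :=
  IsFlower M k P ∧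
  ∀ I : Set (ZMod m), I.Nonempty → I ≠ Set.univ →
    (ExactSep M k (⋃ i ∈ I, P i) ↔ CycInterval I)

/-- A `k`-anemone: a `k`-flower in which the union of every proper nonempty collection
of petals is exactly `k`-separating. -/
noncomputable def IsAnemone (M : Matroid α) (k : ℕ) {m : ℕ} (P : ZMod m → Set α) : Prop :=
  IsFlower M k P ∧
  ∀ I : Set (ZMod m), I.Nonempty → I ≠ Set.univ → ExactSep M k (⋃ i ∈ I, P i)


lemma seg_congr {n : ℕ} (e : ZMod n → α) {a b : ℤ} (t : ℕ) (h : (a : ZMod n) = (b : ZMod n)) :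
    seg e a t = seg e b t := by
  unfold seg
  simp only [Int.cast_add, h]

lemma rk_arc {n : ℕ} (M : Matroid α) (e : ZMod n → α) (t : ℕ) (ht : 1 ≤ t) (a : ℤ)
    (hE : Set.range e = M.E)
    (hc : ∀ j : ℕ, M.IsCircuit (seg e (a + 2 * j) t)) (hn : (seg e a t).encard = t) (k : ℕ) :
    M.eRk (seg e a (t + 2 * k)) + 1 ≤ (t + k : ℕ) := by
  induction k with
  | zero =>
    have := (hc 0).eRk_add_one_eq
    simp only [Nat.cast_zero, mul_zero, add_zero] at this
    simp only [mul_zero, add_zero]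
    rw [this, hn]
  | succ k ih =>
    set X := seg e a (t + 2 * k) with hX
    set p := e ((a + (t + 2 * k : ℕ) : ℤ) : ZMod n) with hp
    set q := e ((a + (t + 2 * k + 1 : ℕ) : ℤ) : ZMod n) with hq
    have hC := hc (k + 1)
    set C := seg e (a + 2 * ((k + 1 : ℕ) : ℤ)) t with hCdef
    have h1 : seg e a (t + 2 * (k + 1)) ⊆ insert q (insert p X) := by
      rintro _ ⟨j, hj, rfl⟩
      simp only [Set.mem_Iio] at hj
      rcases lt_trichotomy j (t + 2 * k) with h | h | h
      · right; right; exact ⟨j, h, rfl⟩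
      · right; left; simp only [hp, h]
      · left
        have : j = t + 2 * k + 1 := by omega
        simp only [hq, this]
    have hqC : q ∈ C := by
      refine ⟨t - 1, by simp only [Set.mem_Iio]; omega, ?_⟩
      simp only [hq]
      congr 2
      push_cast [ht]; ring
    have h2 : C \ {q} ⊆ insert p X := by
      rintro _ ⟨⟨j, hj, rfl⟩, hjq⟩
      simp only [Set.mem_Iio] at hj
      rcases lt_trichotomy (j + 2) t with h | h | h
      · right
        refine ⟨2 * k + 2 + j, by simp only [Set.mem_Iio]; omega, ?_⟩
        simp only
        congr 2
        push_cast; ring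
      · left
        simp only [hp]
        congr 2
        rw [← h]
        push_cast; ring
      · exfalso
        apply hjq
        have : t = j + 1 := by omega
        simp only [hq, Set.mem_singleton_iff]
        congr 2
        rw [this]
        push_cast; ring
    have h3 : q ∈ M.closure (insert p X) :=
      M.closure_subset_closure h2 (hC.mem_closure_sdiff_singleton_of_mem hqC)
    have h4 : M.eRk (insert q (insert p X)) = M.eRk (insert p X) := by
      rw [← M.eRk_insert_closure_eq, Set.insert_eq_of_mem h3, M.eRk_closure_eq]
    calc M.eRk (seg e a (t + 2 * (k + 1))) + 1 ≤ M.eRk (insert q (insert p X)) + 1 := by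
            gcongr; exact M.eRk_mono h1
      _ = M.eRk (insert p X) + 1 := by rw [h4]
      _ ≤ (M.eRk X + 1) + 1 := by gcongr; exact M.eRk_insert_le_add_one p X
      _ ≤ ((t + k : ℕ) : ℕ∞) + 1 := by gcongr
      _ = _ := by push_cast; ring

lemma rank_le {n : ℕ} (M : Matroid α) (e : ZMod n → α) (t m : ℕ) (ht : 1 ≤ t) (a : ℤ)
    (hE : Set.range e = M.E) (hn0 : n ≠ 0)
    (hnm : n = 2 * t + 2 * m)
    (hK : M✶.IsCircuit (seg e a t))
    (hc : ∀ j : ℕ, M.IsCircuit (seg e (a + t + 2 * j) t))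
    (hn : (seg e (a + t) t).encard = t) :
    M.eRank ≤ (t + m : ℕ) := by
  obtain ⟨y, hy⟩ := hK.nonempty
  have h1 : M.Coindep (seg e a t \ {y}) := hK.sdiff_singleton_indep hy
  have h2 := h1.compl_spanning
  rw [← h2.eRk_eq]
  have h3 : M.E \ (seg e a t \ {y}) ⊆ insert y (seg e (a + t) (t + 2 * m)) := by
    rintro x ⟨hx, hx'⟩
    by_cases hxy : x = y
    · left; exact hxy
    right
    rw [← hE] at hx
    obtain ⟨z, rfl⟩ := hx
    obtain ⟨z, rfl⟩ := ZMod.intCast_surjective z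
    have hpos : (0 : ℤ) < n := by omega
    have r0 := Int.emod_nonneg (z - a) hpos.ne'
    have r1 := Int.emod_lt_of_pos (z - a) hpos
    have hz : ((a + (z - a) % n : ℤ) : ZMod n) = (z : ZMod n) := by
      rw [ZMod.intCast_eq_intCast_iff]
      have : (z - a) % n ≡ z - a [ZMOD n] := Int.mod_modEq _ _
      simpa using this.add_left a
    obtain ⟨r, hr⟩ := Int.eq_ofNat_of_zero_le r0
    rw [hr] at hz r1
    by_cases hrt : r < t
    · exact absurd ⟨⟨r, hrt, by simp only; rw [← hz]⟩, hxy⟩ hx'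
    · refine ⟨r - t, by simp only [Set.mem_Iio]; omega, ?_⟩
      simp only
      rw [← hz]
      congr 2
      push_cast [not_lt.1 hrt]; ring
  exact (M.eRk_mono h3).trans ((M.eRk_insert_le_add_one _ _).trans
    (rk_arc M e t ht (a + t) hE hc hn m))

lemma inter_single {n : ℕ} (M : Matroid α) (e : ZMod n → α) (he : Function.Injective e)
    (t : ℕ) (ht : 1 ≤ t) (hn : 2 * t ≤ n + 1) (a b : ℤ)
    (hab : (b : ZMod n) = ((a + t - 1 : ℤ) : ZMod n))
    (h : (M.IsCircuit (seg e a t) ∧ M✶.IsCircuit (seg e b t)) ∨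
      (M✶.IsCircuit (seg e a t) ∧ M.IsCircuit (seg e b t))) : False := by
  rw [seg_congr e t hab] at h
  have hs : seg e a t ∩ seg e (a + t - 1) t = {e ((a + t - 1 : ℤ) : ZMod n)} := by
    apply Set.Subset.antisymm
    · rintro _ ⟨⟨i, hi, rfl⟩, ⟨j, hj, hij⟩⟩
      simp only [Set.mem_Iio] at hi hj
      have h1 := he hij
      rw [ZMod.intCast_eq_intCast_iff_dvd_sub] at h1
      have h2 : (a + i - (a + t - 1 + j) : ℤ) = 0 := by
        apply Int.eq_zero_of_abs_lt_dvd h1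
        rw [abs_lt]
        constructor <;> omega
      have : j = 0 := by omega
      subst this
      simp only [Set.mem_singleton_iff]
      congr 2
      push_cast at h2
      linarith
    · rintro _ rfl
      refine ⟨⟨t - 1, by simp only [Set.mem_Iio]; omega, ?_⟩, ⟨0, by simp only [Set.mem_Iio]; omega, ?_⟩⟩
      · simp only
        congr 2
        push_cast [ht]; ring
      · simp
  rcases h with ⟨h1, h2⟩ | ⟨h1, h2⟩
  · exact h1.inter_isCocircuit_ne_singleton (K := seg e (a + t - 1) t) h2 hs
  · rw [Set.inter_comm] at hs
    exact h2.inter_isCocircuit_ne_singleton (K := seg e a t) h1 hs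

lemma seg_encard {n : ℕ} (e : ZMod n → α) (he : Function.Injective e)
    (t : ℕ) (hn : t ≤ n) (a : ℤ) : (seg e a t).encard = t := by
  unfold seg
  rw [Set.InjOn.encard_image]
  · rw [← Finset.coe_Iio, Set.encard_coe_eq_coe_finsetCard, Nat.card_Iio]
  · intro i hi j hj hij
    simp only [Set.mem_Iio] at hi hj
    have h1 := he hij
    rw [ZMod.intCast_eq_intCast_iff_dvd_sub] at h1
    have h2 : (a + j - (a + i) : ℤ) = 0 := by
      apply Int.eq_zero_of_abs_lt_dvd h1
      rw [abs_lt]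
      constructor <;> omega
    omega

lemma rkf_eq (M : Matroid α) [M.Finite] (k : ℕ) (h : M.eRank = k) : rkf M M.E = k := by
  obtain ⟨B, hB⟩ := M.exists_isBase
  apply IsGreatest.csSup_eq
  constructor
  · refine ⟨B, hB.indep, hB.subset_ground, ?_⟩
    rw [Set.ncard, hB.encard_eq_eRank, h]; rfl
  · rintro _ ⟨I, hI, hIE, rfl⟩
    have := hI.encard_le_eRank
    rw [h, ← (M.set_finite I).cast_ncard_eq] at this
    exact_mod_cast this

lemma ext_odd {n : ℕ} (hn : Even n) (hn0 : n ≠ 0) (z : ℤ) (hz : Odd z) :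
    ∃ i : ℕ, Odd i ∧ 1 ≤ i ∧ i ≤ n ∧ ((i : ℤ) : ZMod n) = (z : ZMod n) := by
  have hpos : (0 : ℤ) < n := by omega
  have r0 := Int.emod_nonneg (z - 1) hpos.ne'
  have r1 := Int.emod_lt_of_pos (z - 1) hpos
  obtain ⟨r, hr⟩ := Int.eq_ofNat_of_zero_le r0
  have hd := Int.emod_add_mul_ediv (z - 1) n
  obtain ⟨c, rfl⟩ := hn
  obtain ⟨w, rfl⟩ := hz
  refine ⟨r + 1, ?_, by omega, by omega, ?_⟩
  · rw [hr] at hd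
    have : Odd ((r : ℤ) + 1) := by
      refine ⟨w - c * ((2 * w + 1 - 1) / ((c + c : ℕ) : ℤ)), ?_⟩
      push_cast at hd ⊢
      linarith
    exact_mod_cast this
  · rw [ZMod.intCast_eq_intCast_iff]
    have : (2 * w + 1 - 1) % ((c + c : ℕ) : ℤ) ≡ 2 * w + 1 - 1 [ZMOD (c + c : ℕ)] :=
      Int.mod_modEq _ _
    rw [hr] at this
    simpa using this.add_right 1

lemma main_aux {n : ℕ} (M : Matroid α) (e : ZMod n → α) (t d : ℕ) (ht : 1 ≤ t) (hd : d ≤ 1)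
    (he : Function.Injective e) (hE : Set.range e = M.E) (hn : t + 1 ≤ n)
    (H1 : ∀ i : ℕ, Odd i → 1 ≤ i → i ≤ n → M.IsCircuit (seg e (i : ℤ) t))
    (H2 : ∀ i : ℕ, Odd i → 1 ≤ i → i ≤ n → M✶.IsCircuit (seg e ((i : ℤ) + d) t)) :
    rkf M M.E = rkf M✶ M✶.E ∧ 2 * rkf M M.E = M.E.ncard := by
  have : NeZero n := ⟨by omega⟩
  have hfin : M.Finite := ⟨by rw [← hE]; exact Set.finite_range e⟩
  have hcard : M.E.ncard = n := by
    rw [← hE, ← Set.image_univ, Set.ncard_image_of_injective _ he, Set.ncard_univ, Nat.card_zmod]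
  have hsum := M.eRank_add_eRank_dual
  rw [← M.ground_finite.cast_ncard_eq, hcard] at hsum
  have hR : M.eRank ≠ ⊤ := by
    intro h; rw [h, top_add] at hsum; exact ENat.top_ne_coe _ hsum
  have hR' : M✶.eRank ≠ ⊤ := by
    intro h; rw [h, add_top] at hsum; exact ENat.top_ne_coe _ hsum
  obtain ⟨r, hr⟩ := ENat.ne_top_iff_exists.1 hR
  obtain ⟨s, hs⟩ := ENat.ne_top_iff_exists.1 hR'
  rw [rkf_eq M r hr.symm, rkf_eq M✶ s hs.symm, hcard]
  rw [← hr, ← hs] at hsum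
  have hsum' : r + s = n := by exact_mod_cast hsum
  by_cases hsmall : n + 2 ≤ 2 * t
  · have a1 := (H1 1 (by decide) le_rfl (by omega)).eRk_add_one_eq
    have a2 := (H2 1 (by decide) le_rfl (by omega)).eRk_add_one_eq
    rw [seg_encard e he t (by omega)] at a1 a2
    have b1 : (t : ℕ∞) ≤ r + 1 := by
      rw [← a1, hr]; gcongr; exact M.eRk_le_eRank _
    have b2 : (t : ℕ∞) ≤ s + 1 := by
      rw [← a2, hs]; gcongr; exact M✶.eRk_le_eRank _
    have c1 : t ≤ r + 1 := by exact_mod_cast b1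
    have c2 : t ≤ s + 1 := by exact_mod_cast b2
    omega
  · have htd : Even (t + d) := by
      by_contra hodd
      rw [Nat.not_even_iff_odd] at hodd
      have hdt : d ≤ t := by omega
      have ho : Odd (t - d) := by
        rw [Nat.odd_iff] at hodd ⊢; omega
      have hpos := ho.pos
      refine inter_single M e he t ht (by omega) 1 ((t - d : ℕ) + d) ?_
        (Or.inl ⟨by simpa using H1 1 (by decide) le_rfl (by omega),
          H2 (t - d) ho hpos (by omega)⟩)
      congr 1
      push_cast [hdt]; ring
    have hne : Even n := by
      by_contra hodd
      rw [Nat.not_even_iff_odd] at hodd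
      obtain rfl | rfl : d = 0 ∨ d = 1 := by omega
      · have ho : Odd (t - 1) := by
          rw [Nat.even_iff] at htd; rw [Nat.odd_iff]; omega
        refine inter_single M e he t ht (by omega) n ((t - 1 : ℕ) + (0 : ℕ)) ?_
          (Or.inl ⟨H1 n hodd (by omega) le_rfl, H2 (t - 1) ho ho.pos (by omega)⟩)
        push_cast [ht]; simp
      · have ho : Odd t := by
          rw [Nat.even_iff] at htd; rw [Nat.odd_iff]; omega
        refine inter_single M e he t ht (by omega) (n + (1 : ℕ)) t ?_
          (Or.inr ⟨H2 n hodd (by omega) le_rfl, H1 t ho ho.pos (by omega)⟩)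
        push_cast; simp
    have G1 : ∀ z : ℤ, Odd z → M.IsCircuit (seg e z t) := by
      intro z hz
      obtain ⟨i, hi, hi1, hin, h⟩ := ext_odd hne (by omega) z hz
      rw [← seg_congr e t h]
      exact H1 i hi hi1 hin
    have G2 : ∀ z : ℤ, Odd z → M✶.IsCircuit (seg e (z + d) t) := by
      intro z hz
      obtain ⟨i, hi, hi1, hin, h⟩ := ext_odd hne (by omega) z hz
      rw [← seg_congr e t (a := i + d) (by push_cast at h ⊢; rw [h])]
      exact H2 i hi hi1 hin
    obtain ⟨c, hc⟩ := hne
    obtain ⟨f, hf⟩ := htd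
    have hnm : n = 2 * t + 2 * (c - t) := by omega
    have k1 := rank_le M e t (c - t) ht (1 + d) hE (by omega) hnm (G2 1 (by decide))
      (fun j => G1 _ ⟨f + j, by
        have : (t : ℤ) + d = f + f := by exact_mod_cast hf
        linarith⟩) (seg_encard e he t (by omega) _)
    have k2 := rank_le M✶ e t (c - t) ht 1 hE (by omega) hnm
      (by rw [Matroid.dual_dual]; exact G1 1 (by decide))
      (fun j => by
        have := G2 (1 + t + 2 * j - d) ⟨f + j - d, by
          have : (t : ℤ) + d = f + f := by exact_mod_cast hf
          linarith⟩
        simpa using this) (seg_encard e he t (by omega) _)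
    rw [← hr] at k1
    rw [← hs] at k2
    have k1' : r ≤ t + (c - t) := by exact_mod_cast k1
    have k2' : s ≤ t + (c - t) := by exact_mod_cast k2
    omega

/-- If `t ≥ 1` and `M` is a `t`-cyclic matroid, then
`r(M) = r*(M) = |E(M)| / 2`. -/
theorem statement_9 (M : Matroid α) (t : ℕ) (ht : 1 ≤ t) (h : TCyclic M t) :
    rkf M M.E = rkf M✶ M✶.E ∧ 2 * rkf M M.E = M.E.ncard := by
  obtain ⟨n, e, ⟨⟨he, hE⟩, hn, H⟩ | ⟨⟨he, hE⟩, hn, H⟩⟩ := h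
  · exact main_aux M e t 1 ht le_rfl he hE hn (fun i h1 h2 h3 => (H i h1 h2 h3).1.1)
      (fun i h1 h2 h3 => (H i h1 h2 h3).2.1)
  · exact main_aux M e t 0 ht zero_le_one he hE hn (fun i h1 h2 h3 => (H i h1 h2 h3).1)
      (fun i h1 h2 h3 => by simpa [Cct, Matroid.IsCircuit] using (H i h1 h2 h3).2.1)

end CyclicArr
end

section
/- Let t be a positive integer, let M be a matroid with a t-cyclic ordering e_1, e_2, …, e_n, and suppose n ≥ 2t. (i) If t is odd (so the ordering is odd t-cyclic), then for all odd i ∈ {1,…,n}, the set {e_i, e_{i+1}, …, e_{i+t−1}} is coindependent in M (independent in M*) and the set {e_{i+1}, e_{i+2}, …, e_{i+t}} is independent in M. (ii) If t is even (so the ordering is even t-cyclic), then for all odd i ∈ {1,…,n}, the set {e_{i+1}, e_{i+2}, …, e_{i+t}} is both independent and coindependent in M. -/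
open Set

namespace CyclicArr

variable {α : Type*}

theorem seg_per {n : ℕ} (e : ZMod n → α) (z : ℤ) (m : ℤ) (t : ℕ) :
    seg e (z + n * m) t = seg e z t := by
  unfold seg
  congr 1
  funext k
  congr 1
  push_cast
  simp

theorem seg_inter {n : ℕ} (e : ZMod n → α) (he : Function.Injective e) (t : ℕ)
    (ht : 1 ≤ t) (hn : 2 * t ≤ n) (p : ℤ) (C : Set α) (hC : C ⊆ seg e p t)
    (hp : e (p : ZMod n) ∈ C) :
    C ∩ seg e (p - t + 1) t = {e (p : ZMod n)} := by
  ext x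
  constructor
  · rintro ⟨h1, h2⟩
    obtain ⟨a, ha, rfl⟩ := hC h1
    obtain ⟨b, hb, hab⟩ := h2
    simp only [Set.mem_Iio] at ha hb
    have h := he hab
    rw [ZMod.intCast_eq_intCast_iff_dvd_sub] at h
    have h3 : (p + a) - (p - t + 1 + b) = (0 : ℤ) := by
      apply Int.eq_zero_of_dvd_of_nonneg_of_lt _ _ h <;> omega
    have : a = 0 := by omega
    subst this
    simp
  · rintro rfl
    refine ⟨hp, t - 1, ?_, ?_⟩
    · simp only [Set.mem_Iio]; omega
    · dsimp only
      congr 2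
      push_cast [ht]
      ring

theorem indep_of {n : ℕ} (N : Matroid α) (e : ZMod n → α) (he : CyclicOrd N e) (t : ℕ)
    (ht : 1 ≤ t) (hn : 2 * t ≤ n) (p : ℤ) (h1 : Cct N (seg e (p + 1) t))
    (h2 : Cct N✶ (seg e (p - t + 1) t)) : N.Indep (seg e p t) := by
  have : NeZero n := ⟨by omega⟩
  have hfin : N.Finite := ⟨by rw [← he.2]; exact Set.finite_range e⟩
  by_contra hI
  have hE : seg e p t ⊆ N.E := by
    rw [← he.2]
    rintro _ ⟨k, _, rfl⟩
    exact Set.mem_range_self _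
  obtain ⟨C, hCs, hC⟩ := ((Matroid.not_indep_iff hE).1 hI).exists_isCircuit_subset
  have hc2 : N.IsCocircuit (seg e (p - t + 1) t) := h2
  have h1' : N.IsCircuit (seg e (p + 1) t) := h1
  have hp : e (p : ZMod n) ∉ C := fun hp =>
    hC.inter_isCocircuit_ne_singleton hc2 (seg_inter e he.1 t ht hn p C hCs hp)
  have hsub : C ⊆ seg e (p + 1) t ∧ e ((p + t : ℤ) : ZMod n) ∉ C := by
    constructor
    · intro x hx
      obtain ⟨a, ha, rfl⟩ := hCs hx
      simp only [Set.mem_Iio] at ha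
      rcases a with _ | a
      · simp at hx; exact absurd hx hp
      · refine ⟨a, by simp only [Set.mem_Iio]; omega, ?_⟩
        dsimp only
        congr 2
        push_cast
        ring
    · intro hx
      obtain ⟨a, ha, hab⟩ := hCs hx
      simp only [Set.mem_Iio] at ha
      have h := he.1 hab
      rw [ZMod.intCast_eq_intCast_iff_dvd_sub] at h
      have h3 : (p + t) - (p + a) = (0 : ℤ) := by
        apply Int.eq_zero_of_dvd_of_nonneg_of_lt _ _ h <;> omega
      omega
  have heq := hC.eq_of_subset_isCircuit h1' hsub.1
  apply hsub.2
  rw [heq]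
  refine ⟨t - 1, by simp only [Set.mem_Iio]; omega, ?_⟩
  dsimp only
  congr 2
  push_cast [ht]
  ring

theorem no_meet {n : ℕ} (N : Matroid α) (e : ZMod n → α) (he : CyclicOrd N e) (t : ℕ)
    (ht : 1 ≤ t) (hn : 2 * t ≤ n) (p : ℤ) (h1 : Cct N (seg e p t))
    (h2 : Cct N✶ (seg e (p - t + 1) t)) : False := by
  have hc2 : N.IsCocircuit (seg e (p - t + 1) t) := h2
  have h1' : N.IsCircuit (seg e p t) := h1
  refine h1'.inter_isCocircuit_ne_singleton hc2
    (seg_inter e he.1 t ht hn p _ Set.Subset.rfl ⟨0, ?_, ?_⟩)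
  · simp only [Set.mem_Iio]; omega
  · simp

theorem extend {n : ℕ} (e : ZMod n → α) (t : ℕ) (hn0 : 0 < n) (hn : Even n)
    (P : Set α → Prop) (c : ℤ)
    (h : ∀ i : ℕ, Odd i → 1 ≤ i → i ≤ n → P (seg e ((i : ℤ) + c) t)) (z : ℤ) (hz : Odd z) :
    P (seg e (z + c) t) := by
  obtain ⟨m, hm⟩ := hn
  obtain ⟨y, hy⟩ := hz
  have h0 : 0 ≤ z % n := Int.emod_nonneg _ (by omega)
  have hl : z % n < n := Int.emod_lt_of_pos _ (by omega)
  have hd := Int.emod_add_mul_ediv z n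
  obtain ⟨r, hr⟩ := Int.eq_ofNat_of_zero_le h0
  rw [hr] at hd hl
  have hodd : Odd (r : ℤ) := by
    refine ⟨y - m * (z / n), ?_⟩
    have : (n : ℤ) = 2 * m := by omega
    rw [this] at hd ⊢
    linarith
  have hodd' : Odd r := by exact_mod_cast hodd
  have := h r hodd' hodd'.pos (by omega)
  rw [← seg_per e _ (z / n)] at this
  convert this using 2
  linarith

theorem CyclicOrd.dual {n : ℕ} {M : Matroid α} {e : ZMod n → α} (h : CyclicOrd M e) :
    CyclicOrd M✶ e := ⟨h.1, by simpa using h.2⟩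

/-- Let `e` be a `t`-cyclic ordering with `n ≥ 2t`. (i) If `t` is odd
(odd ordering), then for all odd `i ∈ {1,…,n}`, `{e_i,…,e_{i+t-1}}` is coindependent and
`{e_{i+1},…,e_{i+t}}` is independent. (ii) If `t` is even (even ordering), then for all
odd `i ∈ {1,…,n}`, `{e_{i+1},…,e_{i+t}}` is both independent and coindependent. -/
theorem statement_10 (M : Matroid α) (t n : ℕ) (ht : 1 ≤ t) (hn : 2 * t ≤ n)
    (e : ZMod n → α) :
    (Odd t → OddTCycOrd M t e →
      ∀ i : ℕ, Odd i → 1 ≤ i → i ≤ n →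
        M✶.Indep (seg e (i : ℤ) t) ∧ M.Indep (seg e ((i : ℤ) + 1) t)) ∧
    (Even t → EvenTCycOrd M t e →
      ∀ i : ℕ, Odd i → 1 ≤ i → i ≤ n →
        M.Indep (seg e ((i : ℤ) + 1) t) ∧ M✶.Indep (seg e ((i : ℤ) + 1) t)) := by
  constructor
  · rintro hto ⟨hc, -, h⟩
    have hne : Even n := by
      by_contra hne
      rw [Nat.not_even_iff_odd] at hne
      refine no_meet M e hc t ht hn t (h t hto ht (by omega)).1.1 ?_
      have := (h n hne (by omega) le_rfl).2.1
      rw [← seg_per e _ (-1)] at this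
      convert this using 2
      ring
    have hC := extend e t (by omega) hne (Cct M) 0
      (fun i h1 h2 h3 => by simpa using (h i h1 h2 h3).1.1)
    have hD := extend e t (by omega) hne (Cct M✶) 1
      (fun i h1 h2 h3 => (h i h1 h2 h3).2.1)
    intro i hi _ _
    have hi' : Odd (i : ℤ) := by exact_mod_cast hi
    have ht' : Odd (t : ℤ) := by exact_mod_cast hto
    constructor
    · refine indep_of M✶ e hc.dual t ht hn i (hD i hi') ?_
      rw [Matroid.dual_dual]
      simpa using hC (i - t + 1) ((hi'.sub_odd ht').add_one)
    · refine indep_of M e hc t ht hn (i + 1) ?_ ?_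
      · have := hC (i + 1 + 1) (hi'.add_one.add_one)
        simpa using this
      · refine hD (i + 1 - t) ?_
        exact hi'.add_one.sub_odd ht'
  · rintro hte ⟨hc, -, h⟩
    have hne : Even n := by
      by_contra hne
      rw [Nat.not_even_iff_odd] at hne
      obtain ⟨s, hs⟩ := hte
      refine no_meet M e hc t ht hn (n + t - 1) ?_ ?_
      · have := (h (t - 1) ⟨s - 1, by omega⟩ (by omega) (by omega)).1
        rw [← seg_per e _ 1] at this
        convert this using 2
        push_cast [ht]
        ring
      · have := (h n hne (by omega) le_rfl).2.1
        convert this using 2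
        ring
    have hC := extend e t (by omega) hne (Cct M) 0
      (fun i h1 h2 h3 => by simpa using (h i h1 h2 h3).1)
    have hD := extend e t (by omega) hne (Cct M✶) 0
      (fun i h1 h2 h3 => by simpa using (h i h1 h2 h3).2.1)
    simp only [add_zero] at hC hD
    intro i hi _ _
    have hi' : Odd (i : ℤ) := by exact_mod_cast hi
    have ht' : Even (t : ℤ) := by exact_mod_cast hte
    have o1 : Odd ((i : ℤ) + 1 + 1) := hi'.add_one.add_one
    have o2 : Odd ((i : ℤ) + 1 - t + 1) := (hi'.add_one.sub ht').add_one
    constructor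
    · exact indep_of M e hc t ht hn (i + 1) (hC _ o1) (hD _ o2)
    · refine indep_of M✶ e hc.dual t ht hn (i + 1) (hD _ o1) ?_
      rw [Matroid.dual_dual]
      exact hC _ o2

end CyclicArr
end

section
/- Let M be a matroid that has the cyclic (1,2)-property, i.e., there is a cyclic ordering e_1, …, e_n of E(M) such that every element e_i is contained in a 2-element circuit and in a 2-element cocircuit of M. Then E(M) can be partitioned into 2-element sets each of which is both a circuit and a cocircuit of M (equivalently, M is a direct sum of copies of U_{1,2}). -/
open Set

namespace CyclicArr

variable {α : Type*}

/-- If a finite matroid `M` has the cyclic `(1, 2)`-property (every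
element of a cyclic ordering lies in a `2`-element circuit and a `2`-element cocircuit),
then `E(M)` can be partitioned into `2`-element sets each of which is both a circuit and
a cocircuit of `M`. -/
theorem statement_19 (M : Matroid α) (hfin : M.E.Finite) (n : ℕ) (e : ZMod n → α)
    (he : CyclicOrd M e)
    (hprop : ∀ i : ZMod n,
      (∃ C, Cct M C ∧ C.ncard = 2 ∧ e i ∈ C) ∧
      (∃ C, Cct M✶ C ∧ C.ncard = 2 ∧ e i ∈ C)) :
    ∃ Fam : Set (Set α),
      (∀ L ∈ Fam, L.ncard = 2 ∧ Cct M L ∧ Cct M✶ L) ∧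
      Fam.PairwiseDisjoint id ∧ ⋃₀ Fam = M.E := by
  have key : ∀ C K x, Cct M C → Cct M✶ K → C.ncard = 2 → K.ncard = 2 → x ∈ C → x ∈ K → C = K := by
    intro C K x hC hK hC2 hK2 hxC hxK
    have hC' : M.IsCircuit C := hC
    have hK' : M.IsCocircuit K := hK
    have hnt : (C ∩ K).Nontrivial := hC'.isCocircuit_inter_nontrivial hK' ⟨x, hxC, hxK⟩
    have hCf : C.Finite := Set.finite_of_ncard_ne_zero (by omega)
    have hKf : K.Finite := Set.finite_of_ncard_ne_zero (by omega)
    have h2 : 2 ≤ (C ∩ K).ncard := by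
      have : Finite ↑(C ∩ K) := (hCf.inter_of_left K).to_subtype
      have := Set.one_lt_ncard_iff_nontrivial.2 hnt
      omega
    have e1 : C ∩ K = C := Set.eq_of_subset_of_ncard_le Set.inter_subset_left (by omega) hCf
    have e2 : C ∩ K = K := Set.eq_of_subset_of_ncard_le Set.inter_subset_right (by omega) hKf
    exact e1.symm.trans e2
  refine ⟨{L | L.ncard = 2 ∧ Cct M L ∧ Cct M✶ L}, fun L hL => hL, ?_, ?_⟩
  · intro L hL L' hL' hne
    by_contra hd
    obtain ⟨x, hx, hx'⟩ := Set.not_disjoint_iff.1 hd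
    exact hne (key L L' x hL.2.1 hL'.2.2 hL.1 hL'.1 hx hx')
  · apply Set.Subset.antisymm
    · rintro x ⟨L, hL, hx⟩
      exact hL.2.1.prop.subset_ground hx
    · intro x hx
      rw [← he.2] at hx
      obtain ⟨i, rfl⟩ := hx
      obtain ⟨⟨C, hC, hC2, hiC⟩, K, hK, hK2, hiK⟩ := hprop i
      have h := key C K _ hC hK hC2 hK2 hiC hiK
      subst h
      exact ⟨C, ⟨hC2, hC, hK⟩, hiC⟩

end CyclicArr
end
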